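/- For every integer d ≥ 1, every natural number k, and all reals a, b with |a − b| ≤ 1, it holds that |((a + b)/2 + ((a − b)/2)·g_d^{(k)}(a − b)) − max(a, b)| ≤ (|a − b|/2)·(1 − |a − b|)^{(p_d)^k}, where the exponentiation is the real power with exponent (p_d)^k. -/

import Mathlib

noncomputable def g (d : ℕ) : ℝ → ℝ :=
  fun m => ∑ i ∈ Finset.range (d + 1),
    (1 / 4 ^ i : ℝ) * (Nat.choose (2 * i) i) * (m * (1 - m ^ 2) ^ i)

noncomputable def p (d : ℕ) : ℝ :=
  ∑ i ∈ Finset.range (d + 1), (1 / 4 ^ i : ℝ) * (Nat.choose (2 * i) i)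

/-!
For `0 < x ≤ 1` and `y = 1 - x ^ 2`, the full series `∑ C(2i, i) / 4 ^ i * y ^ i` sums to
`(1 - y) ^ (-1 / 2) = 1 / x`, so `1 - g d x` is `x` times a tail of this series. Its coefficients
decrease, so the tail is at most `y ^ d` times the tail that starts at `i = 1`, which gives
`1 - g d x ≤ (1 - x ^ 2) ^ d * (1 - x)`. As `p d * (1 - x ^ 2) ^ d` is the derivative of `g d`,
this is the differential inequality saying that `(1 - g d x) / (1 - x) ^ p d` decreases on `[0, 1)`
from its value `1` at `0`. Since `g d` maps `[0, 1]` to itself, the resulting bound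
`1 - g d x ≤ (1 - x) ^ p d` iterates, and oddness of `g d` together with
`max a b = (a + b) / 2 + |a - b| / 2` transfers it to the maximum.
-/

open Set

theorem one_sub_iterate_le_rpow {φ : ℝ → ℝ} {r : ℝ} (hr : 0 ≤ r)
    (hmaps : MapsTo φ (Icc 0 1) (Icc 0 1)) (hφ : ∀ x ∈ Icc 0 1, 1 - φ x ≤ (1 - x) ^ r)
    (k : ℕ) {x : ℝ} (hx : x ∈ Icc 0 1) : 1 - φ^[k] x ≤ (1 - x) ^ (r ^ k) := by
  induction k with
  | zero => simp
  | succ k ih =>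
    have hk : φ^[k] x ∈ Icc 0 1 := hmaps.iterate k hx
    calc 1 - φ^[k + 1] x = 1 - φ (φ^[k] x) := by rw [Function.iterate_succ_apply']
      _ ≤ (1 - φ^[k] x) ^ r := hφ _ hk
      _ ≤ ((1 - x) ^ r ^ k) ^ r := Real.rpow_le_rpow (sub_nonneg.2 hk.2) ih hr
      _ = (1 - x) ^ r ^ (k + 1) := by rw [← Real.rpow_mul (sub_nonneg.2 hx.2), pow_succ]

theorem odd_iterate {α : Type*} [Neg α] {φ : α → α} (hφ : Function.Odd φ) (k : ℕ) :
    Function.Odd φ^[k] :=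
  Function.Commute.iterate_left (g := Neg.neg) hφ k

theorem abs_mul_odd_abs {R : Type*} [Ring R] [LinearOrder R] {φ : R → R} (hφ : Function.Odd φ)
    (x : R) : |x| * φ |x| = x * φ x := by
  rcases abs_choice x with h | h <;> simp [h, hφ x]

theorem max_sub_add_mul_odd {K : Type*} [Field K] [LinearOrder K] [IsStrictOrderedRing K]
    {φ : K → K} (hφ : Function.Odd φ) (a b : K) :
    max a b - ((a + b) / 2 + (a - b) / 2 * φ (a - b)) = |a - b| / 2 * (1 - φ |a - b|) := by
  have hmax : max a b = (a + b) / 2 + |a - b| / 2 := by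
    linarith [max_add_min a b, max_sub_min_eq_abs' a b]
  rw [hmax]
  linear_combination abs_mul_odd_abs hφ (a - b) / 2

theorem antitoneOn_mul_sub_rpow {f f' : ℝ → ℝ} {b r : ℝ} {s : Set ℝ} (hs : Convex ℝ s)
    (hsb : s ⊆ Iio b) (hf : ContinuousOn f s)
    (hf' : ∀ x ∈ interior s, HasDerivWithinAt f (f' x) (interior s) x)
    (hle : ∀ x ∈ interior s, (b - x) * f' x ≤ r * f x) :
    AntitoneOn (fun x ↦ f x * (b - x) ^ r) s := by
  have hpos : ∀ x ∈ s, 0 < b - x := fun x hx ↦ sub_pos.2 (hsb hx)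
  refine antitoneOn_of_hasDerivWithinAt_nonpos hs
    (f' := fun x ↦ (b - x) ^ (r - 1) * ((b - x) * f' x - r * f x)) ?_ (fun x hx ↦ ?_)
    (fun x hx ↦ ?_)
  · exact hf.mul ((continuousOn_const.sub continuousOn_id).rpow_const
      fun x hx ↦ Or.inl (hpos x hx).ne')
  · have hx0 := hpos x (interior_subset hx)
    have hsub : HasDerivWithinAt (fun y ↦ b - y) (-1) (interior s) x :=
      (hasDerivWithinAt_id x _).const_sub b
    refine ((hf' x hx).mul (hsub.rpow_const (p := r) (Or.inl hx0.ne'))).congr_deriv ?_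
    rw [show (b - x) ^ r = (b - x) ^ (r - 1) * (b - x) by
      rw [← Real.rpow_add_one hx0.ne', sub_add_cancel]]
    ring
  · exact mul_nonpos_of_nonneg_of_nonpos (Real.rpow_nonneg (hpos x (interior_subset hx)).le _)
      (sub_nonpos.2 (hle x hx))

theorem succ_mul_multichoose_succ {R : Type*} [CommRing R] [BinomialRing R] (r : R) (n : ℕ) :
    (n + 1) * Ring.multichoose r (n + 1) = (r + n) * Ring.multichoose r n := by
  have : IsAddTorsionFree R := BinomialRing.toIsAddTorsionFree
  rw [← nsmul_right_inj n.factorial_ne_zero]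
  have hn := Ring.factorial_nsmul_multichoose_eq_ascPochhammer r n
  have hsucc := Ring.factorial_nsmul_multichoose_eq_ascPochhammer r (n + 1)
  rw [Polynomial.ascPochhammer_smeval_eq_eval] at hn hsucc
  rw [ascPochhammer_succ_eval, ← hn, Nat.factorial_succ] at hsucc
  simp only [nsmul_eq_mul] at hsucc ⊢
  push_cast at hsucc
  linear_combination hsucc

theorem sub_sum_range_succ_le_of_antitone {R : Type*} [CommRing R] [PartialOrder R]
    [IsOrderedRing R] [TopologicalSpace R] [IsTopologicalRing R] [OrderClosedTopology R]
    {c : ℕ → R} (hc : Antitone c) {y S : R} (hy : 0 ≤ y)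
    (hS : HasSum (fun i ↦ c i * y ^ i) S) (n : ℕ) :
    S - ∑ i ∈ Finset.range (n + 1), c i * y ^ i ≤ y ^ n * (S - c 0) := by
  have htail := (hasSum_nat_add_iff' (n + 1)).2 hS
  have hshift : HasSum (fun i ↦ y ^ n * (c (i + 1) * y ^ (i + 1))) (y ^ n * (S - c 0)) := by
    simpa using ((hasSum_nat_add_iff' 1).2 hS).mul_left (y ^ n)
  refine hasSum_le (fun i ↦ ?_) htail hshift
  calc c (i + (n + 1)) * y ^ (i + (n + 1)) ≤ c (i + 1) * y ^ (i + (n + 1)) := by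
        gcongr
        exact hc (by lia)
    _ = y ^ n * (c (i + 1) * y ^ (i + 1)) := by ring

/-- The normalized central binomial coefficient `C(2n, n) / 4 ^ n`: the `n`-th Taylor coefficient
of `(1 - y) ^ (-1 / 2)` at `0`, and the `n`-th coefficient in `g` and `p`. -/
noncomputable def invSqrtCoeff (n : ℕ) : ℝ :=
  n.centralBinom / 4 ^ n

theorem invSqrtCoeff_zero : invSqrtCoeff 0 = 1 := by simp [invSqrtCoeff]

theorem invSqrtCoeff_nonneg (n : ℕ) : 0 ≤ invSqrtCoeff n := by
  unfold invSqrtCoeff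
  positivity

theorem succ_mul_invSqrtCoeff_succ (n : ℕ) :
    (n + 1) * invSqrtCoeff (n + 1) = (1 / 2 + n) * invSqrtCoeff n := by
  have h : ((n : ℝ) + 1) * (n + 1).centralBinom = 2 * (2 * n + 1) * n.centralBinom :=
    mod_cast n.succ_mul_centralBinom_succ
  simp only [invSqrtCoeff, pow_succ]
  field_simp
  linear_combination 2 * h

theorem antitone_invSqrtCoeff : Antitone invSqrtCoeff := by
  refine antitone_nat_of_succ_le fun n ↦ ?_
  refine le_of_mul_le_mul_left ?_ n.cast_add_one_pos
  rw [succ_mul_invSqrtCoeff_succ]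
  exact mul_le_mul_of_nonneg_right (by linarith) (invSqrtCoeff_nonneg n)

theorem multichoose_half (n : ℕ) : Ring.multichoose (1 / 2 : ℝ) n = invSqrtCoeff n := by
  induction n with
  | zero => simp [invSqrtCoeff_zero]
  | succ n ih =>
    apply mul_left_cancel₀ (n.cast_add_one_ne_zero (R := ℝ))
    rw [succ_mul_multichoose_succ, ih, succ_mul_invSqrtCoeff_succ]

theorem hasSum_invSqrtCoeff_mul_pow {y : ℝ} (hy : |y| < 1) :
    HasSum (fun n ↦ invSqrtCoeff n * y ^ n) (1 / √(1 - y)) := by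
  have h := (Real.one_div_one_sub_rpow_hasFPowerSeriesOnBall_zero (1 / 2)).hasSum
    (y := y) (by simpa [enorm_eq_nnnorm] using! hy)
  simpa [-one_div, ← Ring.multichoose_eq, multichoose_half, ← Real.sqrt_eq_rpow, mul_comm] using h

theorem p_eq_sum (d : ℕ) : p d = ∑ i ∈ Finset.range (d + 1), invSqrtCoeff i := by
  simp only [p, invSqrtCoeff, Nat.centralBinom, one_div_mul_eq_div]

theorem p_nonneg (d : ℕ) : 0 ≤ p d := by
  rw [p_eq_sum]
  exact Finset.sum_nonneg fun i _ ↦ invSqrtCoeff_nonneg i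

theorem p_succ (d : ℕ) : p (d + 1) = p d + invSqrtCoeff (d + 1) := by
  simp only [p_eq_sum, Finset.sum_range_succ]

theorem p_eq_mul_invSqrtCoeff (d : ℕ) : p d = (2 * d + 1) * invSqrtCoeff d := by
  induction d with
  | zero => simp [p_eq_sum]
  | succ d ih =>
    rw [p_succ, ih]
    push_cast
    linear_combination -2 * succ_mul_invSqrtCoeff_succ d

theorem g_eq_mul_sum (d : ℕ) (x : ℝ) :
    g d x = x * ∑ i ∈ Finset.range (d + 1), invSqrtCoeff i * (1 - x ^ 2) ^ i := by
  simp only [g, invSqrtCoeff, Nat.centralBinom, Finset.mul_sum]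
  exact Finset.sum_congr rfl fun i _ ↦ by ring

theorem g_zero_right (d : ℕ) : g d 0 = 0 := by simp [g]

theorem odd_g (d : ℕ) : Function.Odd (g d) := fun x ↦ by simp [g_eq_mul_sum]

theorem g_succ (d : ℕ) (x : ℝ) :
    g (d + 1) x = g d x + invSqrtCoeff (d + 1) * (x * (1 - x ^ 2) ^ (d + 1)) := by
  simp only [g_eq_mul_sum, Finset.sum_range_succ _ (d + 1)]
  ring

theorem hasDerivAt_g (d : ℕ) (x : ℝ) : HasDerivAt (g d) (p d * (1 - x ^ 2) ^ d) x := by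
  induction d with
  | zero =>
    have hg : g 0 = id := funext fun x ↦ by simp [g]
    simpa [hg, p] using hasDerivAt_id x
  | succ d ih =>
    have hsq : HasDerivAt (fun x : ℝ ↦ 1 - x ^ 2) (-(2 * x)) x := by
      simpa using (hasDerivAt_pow 2 x).const_sub 1
    have hterm := ((hasDerivAt_id' x).mul (hsq.pow (d + 1))).const_mul (invSqrtCoeff (d + 1))
    rw [show g (d + 1) = _ from funext (g_succ d)]
    refine (ih.add hterm).congr_deriv ?_
    simp only [p_succ, p_eq_mul_invSqrtCoeff d, Nat.add_sub_cancel, Pi.pow_apply]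
    push_cast
    linear_combination -2 * (1 - x ^ 2) ^ d * x ^ 2 * succ_mul_invSqrtCoeff_succ d

theorem hasSum_invSqrtCoeff_mul_one_sub_sq_pow {x : ℝ} (hx : x ∈ Ioc 0 1) :
    HasSum (fun n ↦ invSqrtCoeff n * (1 - x ^ 2) ^ n) x⁻¹ := by
  have hy : |1 - x ^ 2| < 1 := by
    rw [abs_lt]
    constructor <;> nlinarith [hx.1, hx.2]
  simpa [Real.sqrt_sq hx.1.le] using hasSum_invSqrtCoeff_mul_pow hy

theorem one_sub_sq_nonneg {x : ℝ} (hx : x ∈ Icc 0 1) : 0 ≤ 1 - x ^ 2 :=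
  sub_nonneg.2 (pow_le_one₀ hx.1 hx.2)

theorem mapsTo_g (d : ℕ) : MapsTo (g d) (Icc 0 1) (Icc 0 1) := by
  intro x hx
  have hterm (i : ℕ) : 0 ≤ invSqrtCoeff i * (1 - x ^ 2) ^ i :=
    mul_nonneg (invSqrtCoeff_nonneg i) (pow_nonneg (one_sub_sq_nonneg hx) i)
  rw [g_eq_mul_sum]
  refine ⟨mul_nonneg hx.1 (Finset.sum_nonneg fun i _ ↦ hterm i), ?_⟩
  rcases hx.1.eq_or_lt with rfl | hx0
  · simp
  · have hsum := sum_le_hasSum (Finset.range (d + 1)) (fun i _ ↦ hterm i)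
      (hasSum_invSqrtCoeff_mul_one_sub_sq_pow ⟨hx0, hx.2⟩)
    exact (mul_le_mul_of_nonneg_left hsum hx.1).trans_eq (mul_inv_cancel₀ hx0.ne')

theorem one_sub_g_le (d : ℕ) {x : ℝ} (hx : x ∈ Icc 0 1) :
    1 - g d x ≤ (1 - x ^ 2) ^ d * (1 - x) := by
  rcases hx.1.eq_or_lt with rfl | hx0
  · simp [g_zero_right]
  have htail := sub_sum_range_succ_le_of_antitone antitone_invSqrtCoeff (one_sub_sq_nonneg hx)
    (hasSum_invSqrtCoeff_mul_one_sub_sq_pow ⟨hx0, hx.2⟩) d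
  rw [invSqrtCoeff_zero] at htail
  calc 1 - g d x
      = x * (x⁻¹ - ∑ i ∈ Finset.range (d + 1), invSqrtCoeff i * (1 - x ^ 2) ^ i) := by
        rw [g_eq_mul_sum, mul_sub, mul_inv_cancel₀ hx0.ne']
    _ ≤ x * ((1 - x ^ 2) ^ d * (x⁻¹ - 1)) := by gcongr
    _ = (1 - x ^ 2) ^ d * (1 - x) := by field_simp

theorem antitoneOn_one_sub_g_mul_rpow_neg (d : ℕ) :
    AntitoneOn (fun x ↦ (1 - g d x) * (1 - x) ^ (-p d)) (Ico 0 1) := by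
  have hderiv (x : ℝ) : HasDerivAt (fun x ↦ 1 - g d x) (-(p d * (1 - x ^ 2) ^ d)) x :=
    (hasDerivAt_g d x).const_sub 1
  refine antitoneOn_mul_sub_rpow (convex_Ico 0 1) Ico_subset_Iio_self
    (fun x _ ↦ (hderiv x).continuousAt.continuousWithinAt)
    (fun x _ ↦ (hderiv x).hasDerivWithinAt) fun x hx ↦ ?_
  have hbound := one_sub_g_le d (Ico_subset_Icc_self (interior_subset hx))
  linarith [mul_le_mul_of_nonneg_left hbound (p_nonneg d)]

theorem one_sub_g_le_rpow (d : ℕ) {x : ℝ} (hx : x ∈ Icc 0 1) :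
    1 - g d x ≤ (1 - x) ^ p d := by
  rcases hx.2.eq_or_lt with rfl | hx1
  · exact (one_sub_g_le d hx).trans (by simpa using Real.zero_rpow_nonneg (p d))
  have hpos : 0 < (1 - x) ^ p d := Real.rpow_pos_of_pos (sub_pos.2 hx1) _
  have hquot : (1 - g d x) * (1 - x) ^ (-p d) ≤ 1 := by
    simpa [g_zero_right] using
      antitoneOn_one_sub_g_mul_rpow_neg d (by simp) ⟨hx.1, hx1⟩ hx.1
  rwa [Real.rpow_neg (sub_nonneg.2 hx.2), ← div_eq_mul_inv, div_le_one hpos] at hquot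

theorem stmt_12 (d : ℕ) (hd : 1 ≤ d) (k : ℕ) (a b : ℝ) (hab : |a - b| ≤ 1) :
    |((a + b) / 2 + ((a - b) / 2) * (g d)^[k] (a - b)) - max a b| ≤
      (|a - b| / 2) * (1 - |a - b|) ^ (p d ^ k) := by
  have hmem : |a - b| ∈ Icc 0 1 := ⟨abs_nonneg _, hab⟩
  have hiter_le_one : (g d)^[k] |a - b| ≤ 1 := ((mapsTo_g d).iterate k hmem).2
  rw [abs_sub_comm, max_sub_add_mul_odd (odd_iterate (odd_g d) k),
    abs_of_nonneg (mul_nonneg (by positivity) (sub_nonneg.2 hiter_le_one))]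
  gcongr
  exact one_sub_iterate_le_rpow (p_nonneg d) (mapsTo_g d) (fun _ ↦ one_sub_g_le_rpow d) k hmem
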